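/- For α ∈ (0,π/2] and τ ∈ ℝ, let s(α,τ) be the infimum over smooth compactly supported u : ℝ² → ℂ with ∫_{S_α}|u|² > 0 of (∫_{S_α} |∇u|² + (x₁·sin(α/2) − x₂·cos(α/2) − τ)²·|u|² dx)/(∫_{S_α}|u|² dx). Then for every fixed τ ∈ ℝ, the map α ↦ s(α,τ) is non-decreasing on (0,π/2]. -/

import Mathlib

open Real MeasureTheory Set Filter

noncomputable section

namespace MagWedge

/-- The infinite sector `S_α := {(x₁,x₂) : |x₂| ≤ x₁·tan(α/2)}`. -/
def sector (α : ℝ) : Set (ℝ × ℝ) :=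
  {x | |x.2| ≤ x.1 * Real.tan (α / 2)}

/-- The infinite wedge `W_α := S_α × ℝ` (coordinates `(x₁, x₂, x₃)`). -/
def wedge (α : ℝ) : Set (ℝ × ℝ × ℝ) :=
  {x | |x.2.1| ≤ x.1 * Real.tan (α / 2)}

/-- The upper half-plane `Hp^up := {x₂ < x₁·tan(α/2)}`. -/
def hpUp (α : ℝ) : Set (ℝ × ℝ) :=
  {x | x.2 < x.1 * Real.tan (α / 2)}

/-- The lower half-plane `Hp^low := {x₂ > −x₁·tan(α/2)}`. -/
def hpLow (α : ℝ) : Set (ℝ × ℝ) :=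
  {x | -(x.1 * Real.tan (α / 2)) < x.2}

/-- The magnetic/electric energy of `u` on a planar domain `Ω`, for magnetic field
`(b₁,b₂,b₃)` (gauge `A̲ = (−x₂ b₃, 0)`) and Fourier parameter `τ`. -/
def energy2D (Ω : Set (ℝ × ℝ)) (b1 b2 b3 τ : ℝ) (u : ℝ × ℝ → ℂ) : ℝ :=
  ∫ x in Ω,
    ‖(-Complex.I) * fderiv ℝ u x (1, 0) + ((x.2 * b3 : ℝ) : ℂ) * u x‖ ^ 2
      + ‖fderiv ℝ u x (0, 1)‖ ^ 2
      + (x.1 * b2 - x.2 * b1 - τ) ^ 2 * ‖u x‖ ^ 2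

/-- The squared `L²`-norm of `u` on a planar domain `Ω`. -/
def norm2D (Ω : Set (ℝ × ℝ)) (u : ℝ × ℝ → ℂ) : ℝ := ∫ x in Ω, ‖u x‖ ^ 2

/-- The bottom of the spectrum of the Neumann realization of
`(−i∇−A̲)² + (x₁b₂−x₂b₁−τ)²` on `Ω`, via the Rayleigh quotient. -/
def specInf2D (Ω : Set (ℝ × ℝ)) (b1 b2 b3 τ : ℝ) : ℝ :=
  sInf { r : ℝ | ∃ u : ℝ × ℝ → ℂ, ContDiff ℝ (⊤ : ℕ∞) u ∧ HasCompactSupport u ∧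
    0 < norm2D Ω u ∧ r = energy2D Ω b1 b2 b3 τ u / norm2D Ω u }

/-- The band function `s(B;α,τ)` on the sector `S_α`. -/
def bandFn (α b1 b2 b3 τ : ℝ) : ℝ := specInf2D (sector α) b1 b2 b3 τ

/-- `Σ(B;α,τ,R)` : the Rayleigh quotient infimum over functions supported outside the
(closed Euclidean) ball of radius `R` centered at the origin. -/
def SigmaR (α b1 b2 b3 τ R : ℝ) : ℝ :=
  sInf { r : ℝ | ∃ u : ℝ × ℝ → ℂ, ContDiff ℝ (⊤ : ℕ∞) u ∧ HasCompactSupport u ∧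
    (tsupport u ⊆ {x : ℝ × ℝ | R ^ 2 < x.1 ^ 2 + x.2 ^ 2}) ∧
    0 < norm2D (sector α) u ∧
    r = energy2D (sector α) b1 b2 b3 τ u / norm2D (sector α) u }

/-- The bottom of the essential spectrum via Persson's characterization:
`s_ess(B;α,τ) = sup_{R>0} Σ(B;α,τ,R)`. -/
def sEss (α b1 b2 b3 τ : ℝ) : ℝ :=
  sSup { r : ℝ | ∃ R > (0 : ℝ), r = SigmaR α b1 b2 b3 τ R }

/-- The 3D magnetic energy on a domain `Ω ⊆ ℝ³` for the constant field `(b₁,b₂,b₃)`,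
in the gauge `A = (−x₂b₃, 0, x₂b₁ − x₁b₂)`. -/
def energy3D (Ω : Set (ℝ × ℝ × ℝ)) (b1 b2 b3 : ℝ) (u : ℝ × ℝ × ℝ → ℂ) : ℝ :=
  ∫ x in Ω,
    ‖(-Complex.I) * fderiv ℝ u x (1, 0, 0) + ((x.2.1 * b3 : ℝ) : ℂ) * u x‖ ^ 2
      + ‖fderiv ℝ u x (0, 1, 0)‖ ^ 2
      + ‖(-Complex.I) * fderiv ℝ u x (0, 0, 1) - ((x.2.1 * b1 : ℝ) : ℂ) * u x
          + ((x.1 * b2 : ℝ) : ℂ) * u x‖ ^ 2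

/-- The squared `L²`-norm of `u` on a domain `Ω ⊆ ℝ³`. -/
def norm3D (Ω : Set (ℝ × ℝ × ℝ)) (u : ℝ × ℝ × ℝ → ℂ) : ℝ := ∫ x in Ω, ‖u x‖ ^ 2

/-- `λ(B;W_α)` : the bottom of the spectrum of the Neumann magnetic Laplacian on the
wedge `W_α` with constant magnetic field `B = (b₁,b₂,b₃)`. -/
def lambdaWedge (α b1 b2 b3 : ℝ) : ℝ :=
  sInf { r : ℝ | ∃ u : ℝ × ℝ × ℝ → ℂ, ContDiff ℝ (⊤ : ℕ∞) u ∧ HasCompactSupport u ∧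
    0 < norm3D (wedge α) u ∧ r = energy3D (wedge α) b1 b2 b3 u / norm3D (wedge α) u }

/-- The de Gennes function `μ₁(ξ)`: bottom of the spectrum of the Neumann realization of
`−d²/dt² + (t−ξ)²` on the half-line. -/
def deGennes (ξ : ℝ) : ℝ :=
  sInf { r : ℝ | ∃ u : ℝ → ℂ, ContDiff ℝ (⊤ : ℕ∞) u ∧ HasCompactSupport u ∧
    (0 < ∫ t in Ioi (0 : ℝ), ‖u t‖ ^ 2) ∧
    r = (∫ t in Ioi (0 : ℝ), ‖deriv u t‖ ^ 2 + (t - ξ) ^ 2 * ‖u t‖ ^ 2) /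
        (∫ t in Ioi (0 : ℝ), ‖u t‖ ^ 2) }

/-- `Θ₀ := inf_ξ μ₁(ξ)`. -/
def Theta0 : ℝ := ⨅ ξ : ℝ, deGennes ξ

/-- The half-space `{(s,t,z) : t > 0}` in ℝ³. -/
def halfSpace3 : Set (ℝ × ℝ × ℝ) := {x | 0 < x.2.1}

/-- `σ(θ)` : the bottom of the spectrum of the Neumann magnetic Laplacian on the half-space
with a unit magnetic field making angle `θ` with the boundary. -/
def sigmaHS (θ : ℝ) : ℝ :=
  sInf { r : ℝ | ∃ u : ℝ × ℝ × ℝ → ℂ, ContDiff ℝ (⊤ : ℕ∞) u ∧ HasCompactSupport u ∧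
    (0 < ∫ x in halfSpace3, ‖u x‖ ^ 2) ∧
    r = (∫ x in halfSpace3,
          ‖fderiv ℝ u x (1, 0, 0)‖ ^ 2 + ‖fderiv ℝ u x (0, 1, 0)‖ ^ 2
            + ‖(-Complex.I) * fderiv ℝ u x (0, 0, 1)
                - ((x.2.1 * Real.cos θ : ℝ) : ℂ) * u x
                + ((x.1 * Real.sin θ : ℝ) : ℂ) * u x‖ ^ 2) /
        (∫ x in halfSpace3, ‖u x‖ ^ 2) }

/-- `μ(α)` : the bottom of the spectrum of the magnetic Neumann Laplacian on the sector
`S_α` with unit constant (scalar) magnetic field. -/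
def muSector (α : ℝ) : ℝ :=
  sInf { r : ℝ | ∃ u : ℝ × ℝ → ℂ, ContDiff ℝ (⊤ : ℕ∞) u ∧ HasCompactSupport u ∧
    0 < norm2D (sector α) u ∧
    r = (∫ x in sector α,
          ‖(-Complex.I) * fderiv ℝ u x (1, 0) + (x.2 : ℂ) * u x‖ ^ 2
            + ‖fderiv ℝ u x (0, 1)‖ ^ 2) / norm2D (sector α) u }

end MagWedge

/-!
In the oblique coordinates given by the distances to the two faces, every sector becomes the
quadrant, and up to a Jacobian the form of `-Δ + V(x₁ sin (α/2) - x₂ cos (α/2))` becomes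
`∫ ‖∇v‖² - 2c ⟪∂₁v, ∂₂v⟫ + V(x₂) ‖v‖²` with `c = cos α`. The angle now enters affinely through `c`,
so the bottom of the spectrum is a concave function of `c ∈ [-1, 1]`. It is maximal at `c = 0`: its
value there is the bottom of the half-line operator `-d²/dt² + V`, because the variables separate,
while for every `c` slowly varying products `χ(x₁) φ(x₂)` with `χ(0) = 0` show that it is no larger,
as their cross term is proportional to `∫ χ χ' = -χ(0)²/2 = 0`. A concave function with its maximum
at `0` is antitone on `[0, 1]`, and `cos` is antitone on `(0, π/2]`.
-/

namespace MagWedge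

variable {E F : Type*} [NormedAddCommGroup E] [NormedSpace ℝ E]

section TestFunctions

variable [NormedAddCommGroup F]

/-- Smooth compactly supported functions, the trial functions of all the Rayleigh quotients. -/
structure IsTestFunction [NormedSpace ℝ F] (u : E → F) : Prop where
  contDiff : ContDiff ℝ (⊤ : ℕ∞) u
  hasCompactSupport : HasCompactSupport u

namespace IsTestFunction

section NormedSpace

variable [NormedSpace ℝ F]

lemma continuous {u : E → F} (hu : IsTestFunction u) : Continuous u :=
  hu.contDiff.continuous

lemma differentiable {u : E → F} (hu : IsTestFunction u) : Differentiable ℝ u :=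
  hu.contDiff.differentiable (by simp)

lemma fderiv_apply {u : E → F} (hu : IsTestFunction u) (w : E) :
    IsTestFunction fun x => fderiv ℝ u x w where
  contDiff := (contDiff_infty_iff_fderiv.1 hu.contDiff).2.clm_apply contDiff_const
  hasCompactSupport := hu.hasCompactSupport.fderiv_apply ℝ w

lemma deriv {u : ℝ → F} (hu : IsTestFunction u) : IsTestFunction (deriv u) := by
  simpa only [fderiv_apply_one_eq_deriv] using hu.fderiv_apply 1

lemma comp_continuousLinearEquiv {E' : Type*} [NormedAddCommGroup E'] [NormedSpace ℝ E']
    {u : E → F} (hu : IsTestFunction u) (e : E' ≃L[ℝ] E) : IsTestFunction (u ∘ e) where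
  contDiff := hu.contDiff.comp e.contDiff
  hasCompactSupport := hu.hasCompactSupport.comp_homeomorph e.toHomeomorph

lemma slice {E' : Type*} [NormedAddCommGroup E'] [NormedSpace ℝ E'] {u : E × E' → F}
    (hu : IsTestFunction u) (x : E) : IsTestFunction fun y => u (x, y) where
  contDiff := hu.contDiff.comp (contDiff_const.prodMk contDiff_id)
  hasCompactSupport :=
    .intro (hu.hasCompactSupport.isCompact.image continuous_snd) fun y hy =>
      image_eq_zero_of_notMem_tsupport fun h => hy ⟨(x, y), h, rfl⟩

lemma smul_prod {E' : Type*} [NormedAddCommGroup E'] [NormedSpace ℝ E'] {χ : E → ℝ} {φ : E' → F}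
    (hχ : IsTestFunction χ) (hφ : IsTestFunction φ) :
    IsTestFunction fun x : E × E' => χ x.1 • φ x.2 where
  contDiff := (hχ.contDiff.comp contDiff_fst).smul (hφ.contDiff.comp contDiff_snd)
  hasCompactSupport := by
    refine .intro (hχ.hasCompactSupport.isCompact.prod hφ.hasCompactSupport.isCompact)
      fun x hx => ?_
    rcases not_and_or.1 hx with h | h <;> simp [image_eq_zero_of_notMem_tsupport h]

end NormedSpace

section Integrable

variable [InnerProductSpace ℝ F] [MeasureSpace E] [OpensMeasurableSpace E]
  [IsFiniteMeasureOnCompacts (volume : Measure E)] {u v : E → F} {w : E → ℝ}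

lemma integrable_mul_inner (hw : Continuous w) (hu : IsTestFunction u) (hv : IsTestFunction v) :
    Integrable fun x => w x * inner ℝ (u x) (v x) := by
  refine (hw.mul (hu.continuous.inner hv.continuous)).integrable_of_hasCompactSupport ?_
  refine .intro hu.hasCompactSupport.isCompact fun x hx => ?_
  simp [image_eq_zero_of_notMem_tsupport hx]

lemma integrable_inner (hu : IsTestFunction u) (hv : IsTestFunction v) :
    Integrable fun x => inner ℝ (u x) (v x) := by
  simpa only [one_mul] using integrable_mul_inner (continuous_const (y := (1 : ℝ))) hu hv

lemma integrable_mul_norm_sq (hw : Continuous w) (hu : IsTestFunction u) :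
    Integrable fun x => w x * ‖u x‖ ^ 2 := by
  simpa only [real_inner_self_eq_norm_sq] using integrable_mul_inner hw hu hu

lemma integrable_norm_sq (hu : IsTestFunction u) : Integrable fun x => ‖u x‖ ^ 2 := by
  simpa only [real_inner_self_eq_norm_sq] using hu.integrable_inner hu

end Integrable

end IsTestFunction

end TestFunctions

section RayleighQuotient

/-- The squared `L²`-norm of `u` on `Ω`, which is `norm2D` for complex functions on the plane. -/
def normSq {X : Type*} [MeasureSpace X] [NormedAddCommGroup F] (Ω : Set X) (u : X → F) : ℝ :=
  ∫ x in Ω, ‖u x‖ ^ 2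

lemma normSq_nonneg {X : Type*} [MeasureSpace X] [NormedAddCommGroup F] (Ω : Set X) (u : X → F) :
    0 ≤ normSq Ω u :=
  integral_nonneg fun _ => sq_nonneg _

lemma normSq_const_smul {X : Type*} [MeasureSpace X] [NormedAddCommGroup F] [NormedSpace ℝ F]
    (Ω : Set X) (a : ℝ) (f : X → F) : normSq Ω (fun x => a • f x) = a ^ 2 * normSq Ω f := by
  simp [normSq, norm_smul, mul_pow, integral_const_mul]

/-- The infimum of the Rayleigh quotients `Q u / ‖u‖²` over test functions, with the norm taken
in `L²(Ω)`: the bottom of the spectrum of the Neumann realization associated with the form `Q`. -/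
def rayleighInf [MeasureSpace E] (Ω : Set E) (Q : (E → ℂ) → ℝ) : ℝ :=
  sInf {r | ∃ u, IsTestFunction u ∧ 0 < normSq Ω u ∧ r = Q u / normSq Ω u}

/-- The form `Q` is bounded below in `L²(Ω)`, so that `rayleighInf Ω Q` is a genuine infimum. -/
def IsSemibounded [MeasureSpace E] (Ω : Set E) (Q : (E → ℂ) → ℝ) : Prop :=
  ∃ B, ∀ u, IsTestFunction u → B * normSq Ω u ≤ Q u

variable [MeasureSpace E] [FiniteDimensional ℝ E] {Ω : Set E} {Q : (E → ℂ) → ℝ}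

lemma exists_isTestFunction_tsupport_subset [OpensMeasurableSpace E]
    [IsFiniteMeasureOnCompacts (volume : Measure E)] [(volume : Measure E).IsOpenPosMeasure]
    (hΩ : (interior Ω).Nonempty) :
    ∃ f : E → ℝ, IsTestFunction f ∧ tsupport f ⊆ Ω ∧ 0 < normSq Ω f := by
  obtain ⟨x, hx⟩ := hΩ
  obtain ⟨f, f_sub, f_supp, f_smooth, -, fx⟩ :=
    exists_contDiff_tsupport_subset (n := ⊤) (mem_interior_iff_mem_nhds.1 hx)
  refine ⟨f, ⟨f_smooth, f_supp⟩, f_sub, ?_⟩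
  have normSq_eq : normSq Ω f = ∫ y, ‖f y‖ ^ 2 :=
    setIntegral_eq_integral_of_forall_compl_eq_zero fun y hy => by
      simp [image_eq_zero_of_notMem_tsupport fun h => hy (f_sub h)]
  rw [normSq_eq]
  refine Continuous.integral_pos_of_hasCompactSupport_nonneg_nonzero (x := x)
    (f_smooth.continuous.norm.pow 2) ?_ (fun y => sq_nonneg _) (by simp [fx])
  exact f_supp.comp_left (g := fun r : ℝ => ‖r‖ ^ 2) (by simp)

lemma le_rayleighInf_iff [OpensMeasurableSpace E] [IsFiniteMeasureOnCompacts (volume : Measure E)]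
    [(volume : Measure E).IsOpenPosMeasure] (hΩ : (interior Ω).Nonempty)
    (hQ : IsSemibounded Ω Q) {l : ℝ} :
    l ≤ rayleighInf Ω Q ↔ ∀ u, IsTestFunction u → l * normSq Ω u ≤ Q u := by
  obtain ⟨B, hB⟩ := hQ
  have bddBelow :
      BddBelow {r | ∃ u, IsTestFunction u ∧ 0 < normSq Ω u ∧ r = Q u / normSq Ω u} := by
    refine ⟨B, ?_⟩
    rintro _ ⟨u, hu, u_pos, rfl⟩
    exact (le_div_iff₀ u_pos).2 (hB u hu)
  have nonempty :
      {r | ∃ u, IsTestFunction u ∧ 0 < normSq Ω u ∧ r = Q u / normSq Ω u}.Nonempty := by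
    obtain ⟨f, hf, -, f_pos⟩ := exists_isTestFunction_tsupport_subset hΩ
    refine ⟨_, fun x => (f x : ℂ), ⟨?_, ?_⟩, ?_, rfl⟩
    · exact Complex.ofRealCLM.contDiff.comp hf.contDiff
    · exact hf.hasCompactSupport.comp_left Complex.ofReal_zero
    · simpa only [normSq, Complex.norm_real] using f_pos
  rw [rayleighInf, le_csInf_iff bddBelow nonempty]
  constructor
  · intro h u hu
    rcases (normSq_nonneg Ω u).eq_or_lt with u_zero | u_pos
    · simpa [← u_zero] using hB u hu
    · exact (le_div_iff₀ u_pos).1 (h _ ⟨u, hu, u_pos, rfl⟩)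
  · rintro h _ ⟨u, hu, u_pos, rfl⟩
    exact (le_div_iff₀ u_pos).2 (h u hu)

variable [BorelSpace E] [(volume : Measure E).IsAddHaarMeasure]

lemma setIntegral_image_continuousLinearEquiv [NormedAddCommGroup F] [NormedSpace ℝ F]
    (e : E ≃L[ℝ] E) (hΩ : MeasurableSet Ω) (g : E → F) :
    ∫ x in e '' Ω, g x = |(e : E →L[ℝ] E).det| • ∫ x in Ω, g (e x) := by
  rw [integral_image_eq_integral_abs_det_fderiv_smul volume hΩ
    (fun x _ => e.hasFDerivAt.hasFDerivWithinAt) e.injective.injOn, integral_smul]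

lemma rayleighInf_image_continuousLinearEquiv (e : E ≃L[ℝ] E) (hΩ : MeasurableSet Ω)
    {Q' : (E → ℂ) → ℝ}
    (hQ : ∀ u, IsTestFunction u → Q' u = |(e : E →L[ℝ] E).det| * Q (u ∘ e)) :
    rayleighInf (e '' Ω) Q' = rayleighInf Ω Q := by
  set J := |(e : E →L[ℝ] E).det|
  have J_pos : 0 < J := abs_pos.2 (LinearEquiv.isUnit_det' e.toLinearEquiv).ne_zero
  have normSq_image (u : E → ℂ) : normSq (e '' Ω) u = J * normSq Ω (u ∘ e) :=
    setIntegral_image_continuousLinearEquiv e hΩ _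
  have quotient_image (u : E → ℂ) (hu : IsTestFunction u) :
      Q' u / normSq (e '' Ω) u = Q (u ∘ e) / normSq Ω (u ∘ e) := by
    rw [hQ u hu, normSq_image, mul_div_mul_left _ _ J_pos.ne']
  unfold rayleighInf
  congr 1
  ext r
  constructor
  · rintro ⟨u, hu, u_pos, rfl⟩
    rw [normSq_image, mul_pos_iff_of_pos_left J_pos] at u_pos
    exact ⟨u ∘ e, hu.comp_continuousLinearEquiv e, u_pos, quotient_image u hu⟩
  · rintro ⟨v, hv, v_pos, rfl⟩
    have comp_symm : (v ∘ e.symm) ∘ e = v := by ext x; simp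
    have hu := hv.comp_continuousLinearEquiv e.symm
    refine ⟨v ∘ e.symm, hu, ?_, ?_⟩
    · rw [normSq_image, comp_symm]
      positivity
    · rw [quotient_image _ hu, comp_symm]

end RayleighQuotient

section HalfLine

lemma interior_Ici_zero_nonempty : (interior (Ici (0 : ℝ))).Nonempty := by
  simp

/-- The form of the Neumann realization of `-d²/dt² + V` on the half-line. -/
def halfLineForm (V : ℝ → ℝ) (φ : ℝ → ℂ) : ℝ :=
  ∫ t in Ici 0, ‖deriv φ t‖ ^ 2 + V t * ‖φ t‖ ^ 2

lemma halfLineForm_eq {V : ℝ → ℝ} (hV : Continuous V) {φ : ℝ → ℂ} (hφ : IsTestFunction φ) :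
    halfLineForm V φ = normSq (Ici 0) (deriv φ) + ∫ t in Ici 0, V t * ‖φ t‖ ^ 2 :=
  integral_add hφ.deriv.integrable_norm_sq.integrableOn (hφ.integrable_mul_norm_sq hV).integrableOn

lemma halfLineForm_sub_const {V : ℝ → ℝ} (hV : Continuous V) (l : ℝ) {φ : ℝ → ℂ}
    (hφ : IsTestFunction φ) :
    halfLineForm (fun t => V t - l) φ = halfLineForm V φ - l * normSq (Ici 0) φ := by
  rw [halfLineForm_eq (V := fun t => V t - l) (hV.sub continuous_const) hφ,
    halfLineForm_eq hV hφ, normSq, normSq, ← integral_const_mul, add_sub_assoc, ← integral_sub]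
  · simp only [sub_mul]
  · exact (hφ.integrable_mul_norm_sq hV).integrableOn
  · exact (hφ.integrable_norm_sq.const_mul l).integrableOn

lemma isSemibounded_halfLineForm {V : ℝ → ℝ} (hV : Continuous V) (hVb : BddBelow (range V)) :
    IsSemibounded (Ici 0) (halfLineForm V) := by
  obtain ⟨B, hB⟩ := hVb
  refine ⟨B, fun φ hφ => ?_⟩
  rw [← sub_nonneg, ← halfLineForm_sub_const hV B hφ]
  refine integral_nonneg fun t => add_nonneg (sq_nonneg _) (mul_nonneg ?_ (sq_nonneg _))
  exact sub_nonneg.2 (hB (mem_range_self t))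

lemma integral_Ici_inner_deriv [NormedAddCommGroup F] [InnerProductSpace ℝ F] {f : ℝ → F}
    (hf : IsTestFunction f) : ∫ s in Ici 0, inner ℝ (f s) (deriv f s) = -(‖f 0‖ ^ 2 / 2) := by
  have deriv_norm_sq (s : ℝ) : deriv (fun s => ‖f s‖ ^ 2) s = 2 * inner ℝ (f s) (deriv f s) :=
    (hf.differentiable s).hasDerivAt.norm_sq.deriv
  have ftc := HasCompactSupport.integral_Ioi_deriv_eq
    ((hf.contDiff.of_le (by simp)).norm_sq ℝ)
    (hf.hasCompactSupport.comp_left (g := fun z => ‖z‖ ^ 2) (by simp)) 0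
  simp only [deriv_norm_sq, integral_const_mul] at ftc
  rw [integral_Ici_eq_integral_Ioi]
  linarith

lemma normSq_Ici_comp_mul_left [NormedAddCommGroup F] (f : ℝ → F) {ε : ℝ} (hε : 0 < ε) :
    normSq (Ici 0) (fun s => f (ε * s)) = ε⁻¹ * normSq (Ici 0) f := by
  simp only [normSq, integral_Ici_eq_integral_Ioi]
  simpa using integral_comp_mul_left_Ioi (fun s => ‖f s‖ ^ 2) 0 hε

lemma exists_isTestFunction_normSq_deriv_le {δ : ℝ} (hδ : 0 < δ) :
    ∃ χ : ℝ → ℝ, IsTestFunction χ ∧ χ 0 = 0 ∧ 0 < normSq (Ici 0) χ ∧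
      normSq (Ici 0) (deriv χ) ≤ δ * normSq (Ici 0) χ := by
  obtain ⟨f, hf, f_sub, f_pos⟩ := exists_isTestFunction_tsupport_subset (Ω := Ioi (0 : ℝ))
    (by simp)
  have f_zero : f 0 = 0 := image_eq_zero_of_notMem_tsupport fun h => lt_irrefl (0 : ℝ) (f_sub h)
  rw [normSq, ← integral_Ici_eq_integral_Ioi, ← normSq] at f_pos
  obtain ⟨η, η_pos, hη⟩ := exists_pos_mul_lt (mul_pos hδ f_pos) (normSq (Ici 0) (deriv f))
  set ε := √η
  have ε_pos : 0 < ε := sqrt_pos.2 η_pos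
  have ε_sq : ε ^ 2 = η := sq_sqrt η_pos.le
  refine ⟨fun s => f (ε * s), ?_, by simp [f_zero], ?_, ?_⟩
  · exact ⟨hf.contDiff.comp (contDiff_const.mul contDiff_id),
      hf.hasCompactSupport.comp_homeomorph (Homeomorph.mulLeft₀ ε ε_pos.ne')⟩
  · rw [normSq_Ici_comp_mul_left f ε_pos]
    positivity
  · have deriv_eq : deriv (fun s => f (ε * s)) = fun s => ε • deriv f (ε * s) :=
      funext (deriv_comp_mul_left ε f)
    rw [deriv_eq, normSq_const_smul, normSq_Ici_comp_mul_left (deriv f) ε_pos,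
      normSq_Ici_comp_mul_left f ε_pos, ε_sq, mul_left_comm, mul_left_comm δ, mul_comm η]
    gcongr

end HalfLine

section Quadrant

/-- The closed first quadrant, onto which every sector is straightened. -/
def quadrant : Set (ℝ × ℝ) := Ici 0 ×ˢ Ici 0

/-- The form `‖∇v‖² - 2c ⟪∂₁v, ∂₂v⟫ + V(x₂) ‖v‖²` on the quadrant. For `c = cos α` it is the form
of `-Δ + V` on a sector of opening `α`, read in the oblique coordinates given by the distances to
the two faces. -/
def quadrantForm (V : ℝ → ℝ) (c : ℝ) (v : ℝ × ℝ → ℂ) : ℝ :=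
  ∫ x in quadrant, ‖fderiv ℝ v x (1, 0)‖ ^ 2 + ‖fderiv ℝ v x (0, 1)‖ ^ 2
    - 2 * c * inner ℝ (fderiv ℝ v x (1, 0)) (fderiv ℝ v x (0, 1)) + V x.2 * ‖v x‖ ^ 2

variable {V : ℝ → ℝ} {c : ℝ}

lemma interior_quadrant_nonempty : (interior quadrant).Nonempty := by
  rw [quadrant, interior_prod_eq]
  exact interior_Ici_zero_nonempty.prod interior_Ici_zero_nonempty

lemma measurableSet_quadrant : MeasurableSet quadrant :=
  measurableSet_Ici.prod measurableSet_Ici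

lemma norm_sq_add_norm_sq_sub_inner_nonneg [NormedAddCommGroup F] [InnerProductSpace ℝ F]
    (hc : c ∈ Icc (-1) 1) (a b : F) : 0 ≤ ‖a‖ ^ 2 + ‖b‖ ^ 2 - 2 * c * inner ℝ a b := by
  have inner_le : c * inner ℝ a b ≤ ‖a‖ * ‖b‖ := by
    calc c * inner ℝ a b ≤ |c| * |inner ℝ a b| := abs_mul c _ ▸ le_abs_self _
      _ ≤ 1 * (‖a‖ * ‖b‖) := by
        gcongr
        exacts [abs_le.2 hc, abs_real_inner_le_norm a b]
      _ = ‖a‖ * ‖b‖ := one_mul _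
  nlinarith [sq_nonneg (‖a‖ - ‖b‖)]

lemma quadrantForm_eq (hV : Continuous V) (c : ℝ) {v : ℝ × ℝ → ℂ} (hv : IsTestFunction v) :
    quadrantForm V c v =
      normSq quadrant (fun x => fderiv ℝ v x (1, 0))
        + normSq quadrant (fun x => fderiv ℝ v x (0, 1))
        - 2 * c * (∫ x in quadrant, inner ℝ (fderiv ℝ v x (1, 0)) (fderiv ℝ v x (0, 1)))
        + ∫ x in quadrant, V x.2 * ‖v x‖ ^ 2 := by
  have int_fst := (hv.fderiv_apply (1, 0)).integrable_norm_sq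
  have int_snd := (hv.fderiv_apply (0, 1)).integrable_norm_sq
  have int_cross := ((hv.fderiv_apply (1, 0)).integrable_inner
    (hv.fderiv_apply (0, 1))).const_mul (2 * c)
  have int_pot : Integrable fun x => V x.2 * ‖v x‖ ^ 2 :=
    hv.integrable_mul_norm_sq (hV.comp continuous_snd)
  rw [quadrantForm, integral_add, integral_sub, integral_add, integral_const_mul]
  · rfl
  all_goals apply Integrable.integrableOn
  exacts [int_fst, int_snd, int_fst.add int_snd, int_cross, (int_fst.add int_snd).sub int_cross,
    int_pot]

lemma quadrantForm_convexCombination (hV : Continuous V) {v : ℝ × ℝ → ℂ} (hv : IsTestFunction v)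
    (c d : ℝ) {a b : ℝ} (hab : a + b = 1) :
    quadrantForm V (a * c + b * d) v = a * quadrantForm V c v + b * quadrantForm V d v := by
  simp only [quadrantForm_eq hV _ hv]
  obtain rfl : b = 1 - a := by linarith
  ring

lemma quadrantForm_sub_const (hV : Continuous V) (c l : ℝ) {v : ℝ × ℝ → ℂ}
    (hv : IsTestFunction v) :
    quadrantForm (fun t => V t - l) c v = quadrantForm V c v - l * normSq quadrant v := by
  have potential : ∫ x in quadrant, (V x.2 - l) * ‖v x‖ ^ 2 =
      (∫ x in quadrant, V x.2 * ‖v x‖ ^ 2) - l * normSq quadrant v := by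
    rw [normSq, ← integral_const_mul, ← integral_sub]
    · simp only [sub_mul]
    · exact (hv.integrable_mul_norm_sq (hV.comp continuous_snd)).integrableOn
    · exact (hv.integrable_norm_sq.const_mul l).integrableOn
  rw [quadrantForm_eq (V := fun t => V t - l) (hV.sub continuous_const) c hv,
    quadrantForm_eq hV c hv, potential]
  ring

lemma isSemibounded_quadrantForm (hV : Continuous V) (hVb : BddBelow (range V))
    (hc : c ∈ Icc (-1) 1) : IsSemibounded quadrant (quadrantForm V c) := by
  obtain ⟨B, hB⟩ := hVb
  refine ⟨B, fun v hv => ?_⟩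
  rw [← sub_nonneg, ← quadrantForm_sub_const hV c B hv]
  refine integral_nonneg fun x => add_nonneg (norm_sq_add_norm_sq_sub_inner_nonneg hc _ _)
    (mul_nonneg ?_ (sq_nonneg _))
  exact sub_nonneg.2 (hB (mem_range_self x.2))

lemma concaveOn_rayleighInf_quadrantForm (hV : Continuous V) (hVb : BddBelow (range V)) :
    ConcaveOn ℝ (Icc (-1) 1) fun c => rayleighInf quadrant (quadrantForm V c) := by
  refine ⟨convex_Icc _ _, fun c hc d hd a b ha hb hab => ?_⟩
  have le_form {c : ℝ} (hc : c ∈ Icc (-1) 1) :=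
    (le_rayleighInf_iff interior_quadrant_nonempty (isSemibounded_quadrantForm hV hVb hc)).1 le_rfl
  simp only
  rw [le_rayleighInf_iff interior_quadrant_nonempty
    (isSemibounded_quadrantForm hV hVb (convex_Icc _ _ hc hd ha hb hab))]
  intro v hv
  simp only [smul_eq_mul]
  calc
    (a * rayleighInf quadrant (quadrantForm V c) + b * rayleighInf quadrant (quadrantForm V d))
          * normSq quadrant v
      = a * (rayleighInf quadrant (quadrantForm V c) * normSq quadrant v)
          + b * (rayleighInf quadrant (quadrantForm V d) * normSq quadrant v) := by ring
    _ ≤ a * quadrantForm V c v + b * quadrantForm V d v := by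
      gcongr
      exacts [le_form hc v hv, le_form hd v hv]
    _ = quadrantForm V (a * c + b * d) v := (quadrantForm_convexCombination hV hv c d hab).symm

lemma fderiv_smul_prod [NormedAddCommGroup F] [NormedSpace ℝ F] {χ : ℝ → ℝ} {φ : ℝ → F}
    (hχ : Differentiable ℝ χ) (hφ : Differentiable ℝ φ) (x w : ℝ × ℝ) :
    fderiv ℝ (fun x : ℝ × ℝ => χ x.1 • φ x.2) x w =
      (w.1 * deriv χ x.1) • φ x.2 + χ x.1 • w.2 • deriv φ x.2 := by
  have fst := (hχ x.1).hasDerivAt.hasFDerivAt.comp x hasFDerivAt_fst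
  have snd := (hφ x.2).hasDerivAt.hasFDerivAt.comp x hasFDerivAt_snd
  have h : HasFDerivAt (fun x : ℝ × ℝ => χ x.1 • φ x.2) _ x := fst.smul snd
  rw [h.fderiv]
  simp [add_comm]

lemma setIntegral_quadrant_mul (f g : ℝ → ℝ) :
    ∫ x in quadrant, f x.1 * g x.2 = (∫ s in Ici 0, f s) * ∫ t in Ici 0, g t :=
  setIntegral_prod_mul f g _ _

lemma normSq_quadrant_smul_prod [NormedAddCommGroup F] [NormedSpace ℝ F] (χ : ℝ → ℝ) (φ : ℝ → F) :
    normSq quadrant (fun x => χ x.1 • φ x.2) = normSq (Ici 0) χ * normSq (Ici 0) φ := by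
  simp only [normSq, norm_smul, mul_pow]
  exact setIntegral_quadrant_mul (fun s => ‖χ s‖ ^ 2) (fun t => ‖φ t‖ ^ 2)

lemma quadrantForm_smul_prod (hV : Continuous V) (c : ℝ) {χ : ℝ → ℝ} {φ : ℝ → ℂ}
    (hχ : IsTestFunction χ) (hφ : IsTestFunction φ) :
    quadrantForm V c (fun x => χ x.1 • φ x.2) =
      normSq (Ici 0) (deriv χ) * normSq (Ici 0) φ + normSq (Ici 0) χ * halfLineForm V φ
        - 2 * c * ((∫ s in Ici 0, inner ℝ (χ s) (deriv χ s))
          * ∫ t in Ici 0, inner ℝ (φ t) (deriv φ t)) := by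
  have cross : ∫ x in quadrant, inner ℝ (deriv χ x.1 • φ x.2) (χ x.1 • deriv φ x.2) =
      (∫ s in Ici 0, inner ℝ (χ s) (deriv χ s)) * ∫ t in Ici 0, inner ℝ (φ t) (deriv φ t) := by
    rw [← setIntegral_quadrant_mul]
    simp only [real_inner_smul_left, real_inner_smul_right, RCLike.inner_apply, conj_trivial,
      mul_assoc]
    simp only [← mul_assoc, mul_comm (χ _)]
  have potential : ∫ x in quadrant, V x.2 * ‖χ x.1 • φ x.2‖ ^ 2 =
      normSq (Ici 0) χ * ∫ t in Ici 0, V t * ‖φ t‖ ^ 2 := by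
    rw [normSq, ← setIntegral_quadrant_mul]
    simp only [norm_smul, mul_pow, mul_left_comm]
  rw [quadrantForm_eq hV c (hχ.smul_prod hφ), halfLineForm_eq hV hφ]
  simp only [fderiv_smul_prod hχ.differentiable hφ.differentiable, one_mul, zero_mul, zero_smul,
    one_smul, smul_zero, add_zero, zero_add]
  rw [normSq_quadrant_smul_prod, normSq_quadrant_smul_prod, cross, potential]
  ring

lemma rayleighInf_quadrantForm_le_halfLineForm (hV : Continuous V) (hVb : BddBelow (range V))
    (hc : c ∈ Icc (-1) 1) :
    rayleighInf quadrant (quadrantForm V c) ≤ rayleighInf (Ici 0) (halfLineForm V) := by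
  set l := rayleighInf quadrant (quadrantForm V c) with hl
  have le_quadrantForm := (le_rayleighInf_iff interior_quadrant_nonempty
    (isSemibounded_quadrantForm hV hVb hc)).1 hl.le
  rw [le_rayleighInf_iff interior_Ici_zero_nonempty (isSemibounded_halfLineForm hV hVb)]
  intro φ hφ
  have le_add (δ : ℝ) (hδ : 0 < δ) :
      l * normSq (Ici 0) φ ≤ halfLineForm V φ + δ * normSq (Ici 0) φ := by
    obtain ⟨χ, hχ, χ_zero, χ_pos, deriv_le⟩ := exists_isTestFunction_normSq_deriv_le hδ
    have trial := le_quadrantForm _ (hχ.smul_prod hφ)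
    have cross_zero : ∫ s in Ici 0, inner ℝ (χ s) (deriv χ s) = 0 := by
      rw [integral_Ici_inner_deriv hχ, χ_zero]
      simp
    rw [normSq_quadrant_smul_prod, quadrantForm_smul_prod hV c hχ hφ, cross_zero, zero_mul,
      mul_zero, sub_zero] at trial
    have := mul_le_mul_of_nonneg_right deriv_le (normSq_nonneg (Ici 0) φ)
    refine le_of_mul_le_mul_left ?_ χ_pos
    linarith
  have tendsto_halfLineForm : Tendsto (fun δ => halfLineForm V φ + δ * normSq (Ici 0) φ)
      (nhdsWithin 0 (Ioi 0)) (nhds (halfLineForm V φ)) :=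
    tendsto_nhdsWithin_of_tendsto_nhds (Continuous.tendsto' (by fun_prop) _ _ (by simp))
  exact ge_of_tendsto tendsto_halfLineForm (eventually_nhdsWithin_of_forall le_add)

lemma deriv_slice [NormedAddCommGroup F] [NormedSpace ℝ F] {v : ℝ × ℝ → F}
    (hv : Differentiable ℝ v) (s t : ℝ) : deriv (fun t => v (s, t)) t = fderiv ℝ v (s, t) (0, 1) :=
  ((hv (s, t)).hasFDerivAt.comp_hasDerivAt t
    ((hasDerivAt_const t s).prodMk (hasDerivAt_id t))).deriv

lemma quadrantForm_zero_eq (hV : Continuous V) {v : ℝ × ℝ → ℂ} (hv : IsTestFunction v) :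
    quadrantForm V 0 v = normSq quadrant (fun x => fderiv ℝ v x (1, 0)) +
      ∫ s in Ici 0, halfLineForm V fun t => v (s, t) := by
  have int_snd := (hv.fderiv_apply (0, 1)).integrable_norm_sq.integrableOn (s := quadrant)
  have int_pot : IntegrableOn (fun x => V x.2 * ‖v x‖ ^ 2) quadrant :=
    (hv.integrable_mul_norm_sq (hV.comp continuous_snd)).integrableOn
  have fubini : ∫ s in Ici 0, halfLineForm V (fun t => v (s, t)) =
      ∫ x in quadrant, ‖fderiv ℝ v x (0, 1)‖ ^ 2 + V x.2 * ‖v x‖ ^ 2 := by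
    simp only [halfLineForm, deriv_slice hv.differentiable]
    exact (setIntegral_prod _ (int_snd.add int_pot)).symm
  rw [fubini, integral_add int_snd int_pot, quadrantForm_eq hV 0 hv, ← normSq]
  ring

lemma rayleighInf_halfLineForm_le_quadrantForm_zero (hV : Continuous V)
    (hVb : BddBelow (range V)) :
    rayleighInf (Ici 0) (halfLineForm V) ≤ rayleighInf quadrant (quadrantForm V 0) := by
  set l := rayleighInf (Ici 0) (halfLineForm V) with hl
  have le_halfLineForm := (le_rayleighInf_iff interior_Ici_zero_nonempty
    (isSemibounded_halfLineForm hV hVb)).1 hl.le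
  rw [le_rayleighInf_iff interior_quadrant_nonempty (isSemibounded_quadrantForm hV hVb (by simp))]
  intro v hv
  rw [← sub_nonneg, ← quadrantForm_sub_const hV 0 l hv,
    quadrantForm_zero_eq (V := fun t => V t - l) (hV.sub continuous_const) hv]
  refine add_nonneg (normSq_nonneg _ _) (integral_nonneg fun s => ?_)
  exact (halfLineForm_sub_const hV l (hv.slice s)).symm ▸
    sub_nonneg.2 (le_halfLineForm _ (hv.slice s))

lemma antitoneOn_rayleighInf_quadrantForm (hV : Continuous V) (hVb : BddBelow (range V)) :
    AntitoneOn (fun c => rayleighInf quadrant (quadrantForm V c)) (Icc 0 1) := by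
  intro c hc d hd hcd
  have le_zero :
      rayleighInf quadrant (quadrantForm V d) ≤ rayleighInf quadrant (quadrantForm V 0) :=
    (rayleighInf_quadrantForm_le_halfLineForm hV hVb ⟨by linarith [hd.1], hd.2⟩).trans
      (rayleighInf_halfLineForm_le_quadrantForm_zero hV hVb)
  have min_le := (concaveOn_rayleighInf_quadrantForm hV hVb).min_le_of_mem_Icc
    (x := 0) (y := d) (by simp) ⟨by linarith [hd.1], hd.2⟩ ⟨hc.1, hcd⟩
  rwa [min_eq_right le_zero] at min_le

end Quadrant

section Sector

/-- The form `‖∇u‖² + V(x₁ sin (α/2) - x₂ cos (α/2)) ‖u‖²` on the sector `S_α`: the potential is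
constant along the upper face. -/
def sectorForm (V : ℝ → ℝ) (α : ℝ) (u : ℝ × ℝ → ℂ) : ℝ :=
  ∫ x in sector α, ‖fderiv ℝ u x (1, 0)‖ ^ 2 + ‖fderiv ℝ u x (0, 1)‖ ^ 2
    + V (x.1 * sin (α / 2) - x.2 * cos (α / 2)) * ‖u x‖ ^ 2

/-- The linear map carrying the quadrant onto the sector `S_α`, with `S = sin (α / 2)` and
`C = cos (α / 2)`; its inverse sends a point to its signed distances to the lower and upper
faces. -/
def sectorChart {S C : ℝ} (hS : S ≠ 0) (hC : C ≠ 0) : (ℝ × ℝ) ≃L[ℝ] (ℝ × ℝ) :=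
  LinearEquiv.toContinuousLinearEquiv
    { toFun := fun p => ((p.1 + p.2) / (2 * S), (p.1 - p.2) / (2 * C))
      invFun := fun x => (x.1 * S + x.2 * C, x.1 * S - x.2 * C)
      map_add' := fun p q => by ext <;> simp <;> ring
      map_smul' := fun a p => by ext <;> simp <;> ring
      left_inv := fun p => by ext <;> simp <;> field_simp <;> ring
      right_inv := fun x => by ext <;> simp <;> field_simp <;> ring }

variable {S C : ℝ} (hS : S ≠ 0) (hC : C ≠ 0)

lemma sectorChart_apply (p : ℝ × ℝ) :
    sectorChart hS hC p = ((p.1 + p.2) / (2 * S), (p.1 - p.2) / (2 * C)) :=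
  rfl

lemma sectorChart_symm_apply (x : ℝ × ℝ) :
    (sectorChart hS hC).symm x = (x.1 * S + x.2 * C, x.1 * S - x.2 * C) :=
  rfl

lemma sectorChart_image_quadrant {α : ℝ} (hS : sin (α / 2) ≠ 0) (hC : 0 < cos (α / 2)) :
    sectorChart hS hC.ne' '' quadrant = sector α := by
  ext x
  rw [ContinuousLinearEquiv.image_eq_preimage_symm, mem_preimage, sectorChart_symm_apply]
  simp only [sector, quadrant, mem_ofPred_eq, mem_prod, mem_Ici, tan_eq_sin_div_cos]
  rw [← mul_div_assoc, abs_le, le_div_iff₀ hC, neg_le, le_div_iff₀ hC]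
  constructor <;> rintro ⟨lower, upper⟩ <;> constructor <;> linarith

lemma fderiv_comp_sectorChart [NormedAddCommGroup F] [NormedSpace ℝ F] {u : ℝ × ℝ → F}
    (hu : Differentiable ℝ u) (p w : ℝ × ℝ) :
    fderiv ℝ (u ∘ sectorChart hS hC) p w =
      ((w.1 + w.2) / (2 * S)) • fderiv ℝ u (sectorChart hS hC p) (1, 0) +
        ((w.1 - w.2) / (2 * C)) • fderiv ℝ u (sectorChart hS hC p) (0, 1) := by
  rw [fderiv_comp p (hu _) (sectorChart hS hC).differentiableAt, ContinuousLinearEquiv.fderiv,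
    ← map_smul, ← map_smul, ← map_add]
  simp [sectorChart_apply]

lemma norm_add_sq_add_norm_sub_sq_sub_inner [NormedAddCommGroup F] [InnerProductSpace ℝ F]
    (c : ℝ) (a b : F) :
    ‖a + b‖ ^ 2 + ‖a - b‖ ^ 2 - 2 * c * inner ℝ (a + b) (a - b) =
      2 * (1 - c) * ‖a‖ ^ 2 + 2 * (1 + c) * ‖b‖ ^ 2 := by
  rw [norm_add_sq_real, norm_sub_sq_real, inner_add_left, inner_sub_right, inner_sub_right,
    real_inner_self_eq_norm_sq, real_inner_self_eq_norm_sq, real_inner_comm a b]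
  ring

lemma sectorForm_eq_quadrantForm_comp (V : ℝ → ℝ) {α : ℝ} (hS : sin (α / 2) ≠ 0)
    (hC : 0 < cos (α / 2)) {u : ℝ × ℝ → ℂ} (hu : Differentiable ℝ u) :
    sectorForm V α u = |(sectorChart hS hC.ne' : ℝ × ℝ →L[ℝ] ℝ × ℝ).det| *
      quadrantForm V (cos α) (u ∘ sectorChart hS hC.ne') := by
  have one_sub_cos : 1 - cos α = 2 * sin (α / 2) ^ 2 := by
    rw [sin_sq_eq_half_sub, mul_div_cancel₀ α two_ne_zero]
    ring
  have one_add_cos : 1 + cos α = 2 * cos (α / 2) ^ 2 := by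
    rw [cos_sq, mul_div_cancel₀ α two_ne_zero]
    ring
  rw [sectorForm, ← sectorChart_image_quadrant hS hC,
    setIntegral_image_continuousLinearEquiv _ measurableSet_quadrant, smul_eq_mul, quadrantForm]
  congr 2 with p
  have distance_upper : (sectorChart hS hC.ne' p).1 * sin (α / 2)
      - (sectorChart hS hC.ne' p).2 * cos (α / 2) = p.2 :=
    congrArg Prod.snd ((sectorChart hS hC.ne').symm_apply_apply p)
  simp only [fderiv_comp_sectorChart _ _ hu, distance_upper, Function.comp_apply, add_zero,
    zero_add, sub_zero, zero_sub, neg_div, neg_smul, ← sub_eq_add_neg]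
  rw [norm_add_sq_add_norm_sub_sq_sub_inner, one_sub_cos, one_add_cos, norm_smul, norm_smul,
    mul_pow, mul_pow, Real.norm_eq_abs, Real.norm_eq_abs, sq_abs, sq_abs]
  field_simp

lemma rayleighInf_sectorForm (V : ℝ → ℝ) {α : ℝ} (hα : α ∈ Ioo 0 π) :
    rayleighInf (sector α) (sectorForm V α) = rayleighInf quadrant (quadrantForm V (cos α)) := by
  have hS : 0 < sin (α / 2) := sin_pos_of_mem_Ioo ⟨by linarith [hα.1], by linarith [hα.1, hα.2]⟩
  have hC : 0 < cos (α / 2) := cos_pos_of_mem_Ioo ⟨by linarith [hα.1, hα.2], by linarith [hα.2]⟩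
  rw [← sectorChart_image_quadrant hS.ne' hC]
  exact rayleighInf_image_continuousLinearEquiv _ measurableSet_quadrant fun u hu =>
    sectorForm_eq_quadrantForm_comp V hS.ne' hC hu.differentiable

lemma bandFn_eq_rayleighInf_sectorForm (α τ : ℝ) :
    bandFn α (cos (α / 2)) (sin (α / 2)) 0 τ =
      rayleighInf (sector α) (sectorForm (fun t => (t - τ) ^ 2) α) := by
  have energy_eq (u : ℝ × ℝ → ℂ) : energy2D (sector α) (cos (α / 2)) (sin (α / 2)) 0 τ u =
      sectorForm (fun t => (t - τ) ^ 2) α u := by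
    simp [energy2D, sectorForm]
  have isTestFunction_iff (u : ℝ × ℝ → ℂ) :
      IsTestFunction u ↔ ContDiff ℝ (⊤ : ℕ∞) u ∧ HasCompactSupport u :=
    ⟨fun h => ⟨h.contDiff, h.hasCompactSupport⟩, fun h => ⟨h.1, h.2⟩⟩
  simp only [bandFn, specInf2D, rayleighInf, energy_eq, isTestFunction_iff, and_assoc]
  rfl

end Sector

end MagWedge

open MagWedge in
theorem bandFn_monotone_normal_field_general {V : ℝ → ℝ} (hV : Continuous V)
    (hVb : BddBelow (range V)) :
    MonotoneOn (fun α => rayleighInf (sector α) (sectorForm V α)) (Ioc 0 (π / 2)) := by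
  have cos_mapsTo : MapsTo cos (Ioc 0 (π / 2)) (Icc 0 1) := fun α hα =>
    ⟨cos_nonneg_of_mem_Icc ⟨by linarith [hα.1, pi_pos], hα.2⟩, cos_le_one α⟩
  have cos_antitoneOn : AntitoneOn cos (Ioc 0 (π / 2)) :=
    strictAntiOn_cos.antitoneOn.mono fun α hα => ⟨hα.1.le, by linarith [hα.2, pi_pos]⟩
  refine ((antitoneOn_rayleighInf_quadrantForm hV hVb).comp cos_antitoneOn cos_mapsTo).congr ?_
  exact fun α hα => (rayleighInf_sectorForm V ⟨hα.1, by linarith [hα.2, pi_pos]⟩).symm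

open MagWedge in
/-- for every `τ`, `α ↦ s(α,τ)` is non-decreasing on `(0, π/2]`
(field tangent to a face and normal to the edge, `b₃ = 0`). -/
theorem bandFn_monotone_normal_field (τ : ℝ) :
    MonotoneOn (fun α : ℝ => bandFn α (Real.cos (α / 2)) (Real.sin (α / 2)) 0 τ)
      (Set.Ioc 0 (π / 2)) := by
  simpa only [bandFn_eq_rayleighInf_sectorForm] using
    bandFn_monotone_normal_field_general (V := fun t => (t - τ) ^ 2) (by fun_prop)
      ⟨0, forall_mem_range.2 fun t => sq_nonneg (t - τ)⟩
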